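/- arXiv:2002.08674 — 2 statements merged into one kernel-verified Lean document; each statement's English description precedes it below -/
import Mathlib

section
/- Let H be a complex Hilbert space and T : H → H a bounded linear operator whose range is closed. Assume that ker(T ∘ T) = ker T, that ker T is spanned by a nonzero vector φ₀, and that the kernel of the Hilbert adjoint T* is spanned by a nonzero vector φ₀*. Then the inner product ⟨φ₀, φ₀*⟩ is nonzero. -/
open scoped InnerProductSpace

theorem disjoint_range_ker_iff_ker_comp_eq_ker {R M N P : Type*} [Semiring R]
    [AddCommMonoid M] [AddCommMonoid N] [AddCommMonoid P] [Module R M] [Module R N] [Module R P]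
    {f : M →ₗ[R] N} {g : N →ₗ[R] P} :
    Disjoint f.range g.ker ↔ (g ∘ₗ f).ker = f.ker := by
  calc
    Disjoint f.range g.ker ↔ (g ∘ₗ f).ker ≤ f.ker := by
      simp only [LinearMap.disjoint_ker, LinearMap.mem_range, forall_exists_index,
        forall_apply_eq_imp_iff, SetLike.le_def, LinearMap.mem_ker, LinearMap.comp_apply]
    _ ↔ (g ∘ₗ f).ker = f.ker := (LinearMap.ker_le_ker_comp f g).ge_iff_eq'

section Adjoint

open ContinuousLinearMap (adjoint)

variable {𝕜 E F : Type*} [RCLike 𝕜]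
  [NormedAddCommGroup E] [InnerProductSpace 𝕜 E] [CompleteSpace E]
  [NormedAddCommGroup F] [InnerProductSpace 𝕜 F] [CompleteSpace F]

theorem orthogonal_ker_adjoint_eq_range {T : E →L[𝕜] F} (hrange : IsClosed (Set.range T)) :
    (adjoint T).kerᗮ = T.range := by
  have hclosed : IsClosed (T.range : Set F) := by
    rwa [LinearMap.coe_range, ContinuousLinearMap.coe_coe]
  rw [ContinuousLinearMap.orthogonal_ker, ContinuousLinearMap.adjoint_adjoint,
    hclosed.submodule_topologicalClosure_eq]

theorem disjoint_orthogonal_ker_adjoint_ker {T : E →L[𝕜] E} (hrange : IsClosed (Set.range T))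
    (hker2 : (T ∘L T).ker = T.ker) :
    Disjoint (adjoint T).kerᗮ T.ker := by
  rw [orthogonal_ker_adjoint_eq_range hrange]
  exact disjoint_range_ker_iff_ker_comp_eq_ker.mpr hker2

theorem inner_ne_zero_of_simple_eigenvalue_general {T : E →L[𝕜] E}
    (hrange : IsClosed (Set.range T)) {φ₀ φs : E} (hφ₀ : φ₀ ≠ 0)
    (hker2 : (T ∘L T).ker = T.ker) (hker : φ₀ ∈ T.ker)
    (hkeradj : (adjoint T).ker = Submodule.span 𝕜 {φs}) :
    ⟪φ₀, φs⟫_𝕜 ≠ 0 := by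
  intro hinner
  have horth : φ₀ ∈ (adjoint T).kerᗮ := by
    rwa [hkeradj, Submodule.mem_orthogonal_singleton_iff_inner_left]
  exact hφ₀ (Submodule.disjoint_def.mp (disjoint_orthogonal_ker_adjoint_ker hrange hker2)
    φ₀ horth hker)

end Adjoint

/-- If `T` is a bounded operator on a complex Hilbert space with closed range,
`ker (T ∘ T) = ker T`, `ker T = span {φ₀}` and `ker T* = span {φ₀*}` with
`φ₀, φ₀* ≠ 0`, then `⟪φ₀, φ₀*⟫ ≠ 0`. -/
theorem inner_ne_zero_of_simple_eigenvalue
    {H : Type*} [NormedAddCommGroup H] [InnerProductSpace ℂ H] [CompleteSpace H]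
    (T : H →L[ℂ] H) (hrange : IsClosed (Set.range T))
    (φ₀ φs : H) (hφ₀ : φ₀ ≠ 0) (hφs : φs ≠ 0)
    (hker2 : LinearMap.ker (T ∘L T : H →ₗ[ℂ] H) = LinearMap.ker (T : H →ₗ[ℂ] H))
    (hker : LinearMap.ker (T : H →ₗ[ℂ] H) = Submodule.span ℂ {φ₀})
    (hkeradj : LinearMap.ker (ContinuousLinearMap.adjoint T : H →ₗ[ℂ] H) = Submodule.span ℂ {φs}) :
    ⟪φ₀, φs⟫_ℂ ≠ 0 := by
  exact inner_ne_zero_of_simple_eigenvalue_general hrange hφ₀ hker2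
    (hker ▸ Submodule.mem_span_singleton_self φ₀) hkeradj
end

section
/- Let μ, λ₊, λ₋, d ∈ ℂ with μ ≠ 0 and (μ + λ₋)·(μ + λ₊) ≠ 0. Then there exist A, B, C ∈ ℂ satisfying the four matching equations (i) A = B + C, (ii) A·λ₋ = μB − μC, (iii) e^{−λ₊d} = B·e^{μd} + C·e^{−μd}, (iv) −λ₊·e^{−λ₊d} = μB·e^{μd} − μC·e^{−μd}, if and only if e^{2μd} = ((μ − λ₋)·(μ − λ₊)) / ((μ + λ₋)·(μ + λ₊)). -/
/-!
The right interface prescribes value and slope of the middle profile at `x = d`, which determines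
its two amplitudes `B` and `C`. The left interface only fixes the ratio of `B` to `C`, so the system
is solvable iff the amplitudes forced from the right have that ratio. This is pure algebra in the
nonzero quantities `E = e^{μd}` and `L = e^{-λ₊d}`.
-/

theorem exists_left_interface_matching_iff {R : Type*} [CommRing R] {μ lamM B C : R} :
    (∃ A, A = B + C ∧ A * lamM = μ * B - μ * C) ↔ (μ + lamM) * C = (μ - lamM) * B := by
  rw [exists_eq_left]
  constructor <;> intro h <;> linear_combination h

section Field

variable {K : Type*} [Field K] [NeZero (2 : K)] {μ : K}

theorem eq_add_and_eq_mul_sub_mul_iff (hμ : μ ≠ 0) {v w p q : K} :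
    (v = p + q ∧ w = μ * p - μ * q) ↔
      p = (μ * v + w) / (2 * μ) ∧ q = (μ * v - w) / (2 * μ) := by
  have h2μ : 2 * μ ≠ 0 := mul_ne_zero two_ne_zero hμ
  constructor
  · rintro ⟨rfl, rfl⟩
    constructor <;> rw [eq_div_iff h2μ] <;> ring
  · rintro ⟨rfl, rfl⟩
    constructor <;> field_simp <;> ring

theorem right_interface_matching_iff (hμ : μ ≠ 0) {lamP E L B C : K} (hE : E ≠ 0) :
    (L = B * E + C * E⁻¹ ∧ -lamP * L = μ * B * E - μ * C * E⁻¹) ↔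
      B = (μ - lamP) * L / (2 * μ) * E⁻¹ ∧ C = (μ + lamP) * L / (2 * μ) * E := by
  rw [mul_assoc μ B, mul_assoc μ C, eq_add_and_eq_mul_sub_mul_iff hμ, eq_mul_inv_iff_mul_eq₀ hE,
    ← mul_inv_eq_iff_eq_mul₀ hE]
  ring_nf

theorem exists_matching_iff_sq_mul_eq (hμ : μ ≠ 0) {lamP lamM E L : K} (hE : E ≠ 0) (hL : L ≠ 0) :
    (∃ A B C, A = B + C ∧ A * lamM = μ * B - μ * C ∧
        L = B * E + C * E⁻¹ ∧ -lamP * L = μ * B * E - μ * C * E⁻¹) ↔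
      E ^ 2 * ((μ + lamM) * (μ + lamP)) = (μ - lamM) * (μ - lamP) :=
  calc
    _ ↔ ∃ B C, (∃ A, A = B + C ∧ A * lamM = μ * B - μ * C) ∧
          L = B * E + C * E⁻¹ ∧ -lamP * L = μ * B * E - μ * C * E⁻¹ := by
      grind
    _ ↔ ∃ B C, (μ + lamM) * C = (μ - lamM) * B ∧
          B = (μ - lamP) * L / (2 * μ) * E⁻¹ ∧ C = (μ + lamP) * L / (2 * μ) * E := by
      simp only [exists_left_interface_matching_iff, right_interface_matching_iff hμ hE]
    _ ↔ (μ + lamM) * ((μ + lamP) * L / (2 * μ) * E) =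
          (μ - lamM) * ((μ - lamP) * L / (2 * μ) * E⁻¹) :=
      ⟨by rintro ⟨_, _, hratio, rfl, rfl⟩; exact hratio, fun hratio ↦ ⟨_, _, hratio, rfl, rfl⟩⟩
    _ ↔ E ^ 2 * ((μ + lamM) * (μ + lamP)) = (μ - lamM) * (μ - lamP) := by
      field_simp

end Field

/-- The four C¹-matching equations of the three-layer problem admit a solution
`(A, B, C)` iff the width `d` satisfies
`e^{2μd} = ((μ - λ₋)(μ - λ₊)) / ((μ + λ₋)(μ + λ₊))`. -/
theorem three_layer_matching_iff_width_condition
    (μ lamP lamM d : ℂ) (hμ : μ ≠ 0) (hden : (μ + lamM) * (μ + lamP) ≠ 0) :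
    (∃ A B C : ℂ,
        A = B + C ∧
        A * lamM = μ * B - μ * C ∧
        Complex.exp (-lamP * d) = B * Complex.exp (μ * d) + C * Complex.exp (-μ * d) ∧
        -lamP * Complex.exp (-lamP * d)
          = μ * B * Complex.exp (μ * d) - μ * C * Complex.exp (-μ * d))
      ↔ Complex.exp (2 * μ * d) = ((μ - lamM) * (μ - lamP)) / ((μ + lamM) * (μ + lamP)) := by
  have exp_two_mul_mul : Complex.exp (2 * μ * d) = Complex.exp (μ * d) ^ 2 := by
    rw [mul_assoc, ← Nat.cast_two, Complex.exp_nat_mul]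
  rw [eq_div_iff hden, exp_two_mul_mul, neg_mul μ d, Complex.exp_neg (μ * d)]
  exact exists_matching_iff_sq_mul_eq hμ (Complex.exp_ne_zero _) (Complex.exp_ne_zero _)
end
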